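/- Let B be a supersoluble brace and let p be the largest prime in π(B,+) ∪ {2}, where π(B,+) is the set of primes q such that (B,+) has an element of order q. Let π be the set of all primes q ≤ p. Then B is residually π-finite: the intersection of all ideals I of B such that B/I is finite of order a π-number (all prime divisors of |B/I| lie in π) equals {0}. -/

import Mathlib

/-- A (skew left) brace: a set with an additive group structure (not necessarily abelian)
and a multiplicative group structure sharing the same identity, satisfying the skew
distributive law `a * (b + c) = a * b + -a + a * c`. -/
class SkewBrace (B : Type*) extends AddGroup B, Group B where
  one_eq_zero : (1 : B) = (0 : B)
  skew_distrib : ∀ a b c : B, a * (b + c) = a * b + -a + a * c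

/-- A group is supersoluble if it has a finite chain of normal subgroups with all
factors cyclic. -/
def Group.IsSupersoluble (G : Type*) [Group G] : Prop :=
  ∃ (n : ℕ) (H : ℕ → Subgroup G),
    H 0 = ⊥ ∧ H n = ⊤ ∧ (∀ i, (H i).Normal) ∧ (∀ i, i < n → H i ≤ H (i + 1)) ∧
    ∀ i, i < n → ∃ x ∈ H (i + 1), ∀ y ∈ H (i + 1), ∃ k : ℤ, (x ^ k)⁻¹ * y ∈ H i

namespace SkewBrace

variable {B : Type*} [SkewBrace B]

/-- `lam a b = -a + a * b`, i.e. `λ_a(b)`. -/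
def lam (a b : B) : B := -a + a * b

/-- the star operation `a ∗ b = λ_a(b) - b`. -/
def starOp (a b : B) : B := lam a b + -b

/-- the additive commutator `[a,b]_+`. -/
def addCommutator (a b : B) : B := -a + -b + a + b

/-- A subbrace of `B`: a subset that is a subgroup of both `(B,+)` and `(B,·)`. -/
structure Subbrace (B : Type*) [SkewBrace B] where
  carrier : Set B
  zero_mem : (0 : B) ∈ carrier
  add_mem : ∀ {a b : B}, a ∈ carrier → b ∈ carrier → a + b ∈ carrier
  neg_mem : ∀ {a : B}, a ∈ carrier → -a ∈ carrier
  mul_mem : ∀ {a b : B}, a ∈ carrier → b ∈ carrier → a * b ∈ carrier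
  inv_mem : ∀ {a : B}, a ∈ carrier → a⁻¹ ∈ carrier

/-- An ideal of `B`: a subbrace that is normal in `(B,+)` and in `(B,·)` and is
invariant under all the maps `λ_b`. -/
structure BraceIdeal (B : Type*) [SkewBrace B] extends Subbrace B where
  addConj_mem : ∀ (b : B) {a : B}, a ∈ carrier → b + a + -b ∈ carrier
  mulConj_mem : ∀ (b : B) {a : B}, a ∈ carrier → b * a * b⁻¹ ∈ carrier
  lam_mem : ∀ (b : B) {a : B}, a ∈ carrier → lam b a ∈ carrier

/-- The additive subgroup underlying a subbrace. -/
def Subbrace.addSubgroup (S : Subbrace B) : AddSubgroup B where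
  carrier := S.carrier
  zero_mem' := S.zero_mem
  add_mem' := S.add_mem
  neg_mem' := S.neg_mem

/-- The multiplicative subgroup underlying a subbrace. -/
def Subbrace.subgroup (S : Subbrace B) : Subgroup B where
  carrier := S.carrier
  one_mem' := by rw [one_eq_zero]; exact S.zero_mem
  mul_mem' := S.mul_mem
  inv_mem' := S.inv_mem

/-- Given ideals `J ≤ I` of `B`, `MemSocQuotRel I J x` says that the coset of `x`
lies in `Soc(I/J) = Ker(λ) ∩ Z(I/J, +)` (for `I = B` take `I = Set.univ`). -/
def MemSocQuotRel (I J : Set B) (x : B) : Prop :=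
  x ∈ I ∧ (∀ y ∈ I, -y + lam x y ∈ J) ∧ ∀ y ∈ I, -(y + x) + (x + y) ∈ J

/-- Given ideals `J ≤ I` of `B`, `MemZetaQuotRel I J x` says that the coset of `x`
lies in `ζ(I/J) = Soc(I/J) ∩ Z(I/J, ·)`. -/
def MemZetaQuotRel (I J : Set B) (x : B) : Prop :=
  MemSocQuotRel I J x ∧ ∀ y ∈ I, (y * x)⁻¹ * (x * y) ∈ J

/-- The coset of `x` lies in `Soc(B/J)`. -/
def MemSocQuot (J : Set B) (x : B) : Prop := MemSocQuotRel Set.univ J x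

/-- The coset of `x` lies in `ζ(B/J)`. -/
def MemZetaQuot (J : Set B) (x : B) : Prop := MemZetaQuotRel Set.univ J x

/-- For ideals `I ≤ J`, the additive group of the quotient `J/I` is infinite cyclic. -/
def QuotAddInfCyclic (I J : Set B) : Prop :=
  ∃ x ∈ J, (∀ y ∈ J, ∃ n : ℤ, -(n • x) + y ∈ I) ∧ ∀ n : ℤ, n • x ∈ I → n = 0

/-- For ideals `I ≤ J`, the quotient `J/I` has prime order `p`. -/
def QuotPrimeOrder (I J : Set B) (p : ℕ) : Prop :=
  p.Prime ∧ ∃ x ∈ J, x ∉ I ∧ p • x ∈ I ∧ ∀ y ∈ J, ∃ n : ℤ, -(n • x) + y ∈ I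

/-- A brace is supersoluble if it has a finite chain of ideals each factor of which
either is additively infinite cyclic and contained in the socle of the corresponding
quotient, or has prime order. -/
def IsSupersoluble (B : Type*) [SkewBrace B] : Prop :=
  ∃ (n : ℕ) (I : ℕ → BraceIdeal B),
    (I 0).carrier = {0} ∧ (I n).carrier = Set.univ ∧
    (∀ i, i < n → (I i).carrier ⊆ (I (i + 1)).carrier) ∧
    ∀ i, i < n →
      (QuotAddInfCyclic (I i).carrier (I (i + 1)).carrier ∧
        ∀ x ∈ (I (i + 1)).carrier, MemSocQuot (I i).carrier x) ∨
      ∃ p : ℕ, QuotPrimeOrder (I i).carrier (I (i + 1)).carrier p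

/-- The upper socle series of the brace (carrier of the ideal) `I`. -/
def socChainRel (I : Set B) : ℕ → Set B
  | 0 => {0}
  | n + 1 => {x | MemSocQuotRel I (socChainRel I n) x}

/-- The upper central series of the brace (carrier of the ideal) `I`. -/
def zetaChainRel (I : Set B) : ℕ → Set B
  | 0 => {0}
  | n + 1 => {x | MemZetaQuotRel I (zetaChainRel I n) x}

/-- The upper socle series `Soc_n(B)` of `B`. -/
def socChain (B : Type*) [SkewBrace B] : ℕ → Set B := socChainRel Set.univ

/-- The upper central series `ζ_n(B)` of `B`. -/
def zetaChain (B : Type*) [SkewBrace B] : ℕ → Set B := zetaChainRel Set.univ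

/-- A brace is centrally nilpotent if its upper central series reaches `B`. -/
def IsCentrallyNilpotent (B : Type*) [SkewBrace B] : Prop :=
  ∃ m : ℕ, zetaChain B m = Set.univ

end SkewBrace

namespace SkewBrace
universe u



section basics
variable {B : Type u} [SkewBrace B]

theorem lam_add (a b c : B) : lam a (b + c) = lam a b + lam a c := by
  simp only [lam, skew_distrib, add_assoc]

theorem mul_eq (a b : B) : a * b = a + lam a b := by
  simp [lam]

theorem zero_mul' (b : B) : (0 : B) * b = b := by
  rw [← one_eq_zero, one_mul]

theorem mul_zero' (b : B) : b * (0 : B) = b := by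
  rw [← one_eq_zero, mul_one]

theorem lam_mul (a b c : B) : lam (a * b) c = lam a (lam b c) := by
  have h1 : a * b * c = a * b + lam (a * b) c := mul_eq _ _
  have h2 : a * b * c = a * b + lam a (lam b c) := by
    rw [mul_assoc, mul_eq b c, skew_distrib, mul_eq a (lam b c)]
    simp [add_assoc]
  exact add_left_cancel (h1.symm.trans h2)

theorem lam_zero_left (b : B) : lam 0 b = b := by simp [lam, zero_mul']

theorem lam_one_left (b : B) : lam 1 b = b := by rw [one_eq_zero, lam_zero_left]

/-- The map `λ_a` as an endomorphism. -/
def lamEnd (a : B) : AddMonoid.End B := AddMonoidHom.mk' (lam a) (lam_add a)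

theorem lamEnd_apply (a b : B) : lamEnd a b = lam a b := rfl

theorem lamEnd_pow (a : B) (n : ℕ) : lamEnd (a ^ n) = (lamEnd a) ^ n := by
  induction n with
  | zero =>
    ext b
    simp [lamEnd_apply, lam_one_left]
  | succ n ih =>
    ext b
    rw [pow_succ, pow_succ, ← ih]
    exact lam_mul _ _ _

theorem lam_zsmul (a b : B) (n : ℤ) : lam a (n • b) = n • lam a b :=
  map_zsmul (lamEnd a) n b

theorem lam_nsmul (a b : B) (n : ℕ) : lam a (n • b) = n • lam a b :=
  map_nsmul (lamEnd a) n b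

theorem lam_zero_right (a : B) : lam a 0 = 0 := map_zero (lamEnd a)

theorem lam_neg (a b : B) : lam a (-b) = - lam a b := map_neg (lamEnd a) b

theorem lam_inv_lam (a b : B) : lam a⁻¹ (lam a b) = b := by
  rw [← lam_mul, inv_mul_cancel, lam_one_left]

theorem lam_lam_inv (a b : B) : lam a (lam a⁻¹ b) = b := by
  rw [← lam_mul, mul_inv_cancel, lam_one_left]

theorem lam_injective (a : B) : Function.Injective (lam a) := fun x y h => by
  rw [← lam_inv_lam a x, h, lam_inv_lam]

theorem lam_inv_mul (a b : B) : lam a (a⁻¹ * b) = -a + b := by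
  simp [lam]

theorem inv_eq (a : B) : a⁻¹ = - lam a⁻¹ a := by
  have h : a⁻¹ * a = a⁻¹ + lam a⁻¹ a := mul_eq _ _
  rw [inv_mul_cancel, one_eq_zero] at h
  exact eq_neg_of_add_eq_zero_left h.symm

/-- Conjugation in the additive group. -/
def cnjEnd (a : B) : AddMonoid.End B :=
  AddMonoidHom.mk' (fun b => a + b + -a) (fun x y => by simp [add_assoc])

theorem cnjEnd_apply (a b : B) : cnjEnd a b = a + b + -a := rfl

theorem cnjEnd_nsmul (a : B) (n : ℕ) : cnjEnd (n • a) = (cnjEnd a) ^ n := by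
  induction n with
  | zero =>
    ext b
    simp [cnjEnd_apply]
  | succ n ih =>
    ext b
    rw [succ_nsmul, pow_succ, ← ih]
    show _ = cnjEnd (n • a) (cnjEnd a b)
    simp [cnjEnd_apply, add_assoc]

/-- Membership in the socle. -/
def InSoc (y : B) : Prop := (∀ b : B, lam y b = b) ∧ ∀ b : B, y + b = b + y

theorem InSoc.mul_eq {y : B} (h : InSoc y) (b : B) : y * b = y + b := by
  rw [SkewBrace.mul_eq, h.1]

theorem InSoc.zero : InSoc (0 : B) := ⟨lam_zero_left, by simp⟩

theorem InSoc.add {x y : B} (hx : InSoc x) (hy : InSoc y) : InSoc (x + y) := by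
  refine ⟨fun b => ?_, fun b => ?_⟩
  · rw [← hx.mul_eq, lam_mul, hy.1, hx.1]
  · rw [add_assoc, hy.2, ← add_assoc, hx.2, add_assoc]

theorem InSoc.neg {x : B} (hx : InSoc x) : InSoc (-x) := by
  have h : -x = x⁻¹ := by
    have h1 : x * (-x) = 1 := by rw [hx.mul_eq, one_eq_zero]; simp
    exact eq_inv_of_mul_eq_one_right h1
  refine ⟨fun b => ?_, fun b => ?_⟩
  · rw [h]
    have := lam_inv_lam x b
    rwa [hx.1] at this
  · have := hx.2 (-x + b + -x)
    have h2 : x + (-x + b + -x) = b + -x := by simp [add_assoc]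
    have h3 : (-x + b + -x) + x = -x + b := by simp [add_assoc]
    rw [h2, h3] at this
    exact this.symm

/-- The socle as an additive subgroup. -/
def socSub (B : Type u) [SkewBrace B] : AddSubgroup B where
  carrier := {x | InSoc x}
  zero_mem' := InSoc.zero
  add_mem' := fun hx hy => hx.add hy
  neg_mem' := fun hx => hx.neg

theorem InSoc.zsmul {x : B} (hx : InSoc x) (n : ℤ) : InSoc (n • x) :=
  (socSub B).zsmul_mem hx n

theorem InSoc.nsmul {x : B} (hx : InSoc x) (n : ℕ) : InSoc (n • x) :=
  (socSub B).nsmul_mem hx n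

theorem pow_eq_nsmul {x : B} (hx : ∀ b, lam x b = b) (n : ℕ) : x ^ n = n • x := by
  induction n with
  | zero => simp [one_eq_zero]
  | succ n ih =>
    rw [pow_succ', SkewBrace.mul_eq, hx, ih, succ_nsmul']

theorem InSoc.mulConj {x : B} (hx : InSoc x) (b : B) : b * x * b⁻¹ = b + lam b x + -b := by
  by_contra hne
  apply hne
  have h : InSoc (b + lam b x + -b) ∨ True := Or.inr trivial
  have key : (b + lam b x + -b) = lam b x ∧ InSoc (lam b x) := by
    have hc : ∀ c, lam b x + c = c + lam b x := by
      intro c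
      have := congrArg (lam b) (hx.2 (lam b⁻¹ c))
      rwa [lam_add, lam_add, lam_lam_inv] at this
    refine ⟨by rw [← hc]; simp [add_assoc], ?_, hc⟩
    have hxx : lam b x = b * x * b⁻¹ := by
      have e1 : b * x = b * x * b⁻¹ * b := by group
      have hl : ∀ c, lam (b * x * b⁻¹) c = c := by
        intro c
        rw [lam_mul, lam_mul, hx.1, lam_lam_inv]
      have e2 : b * x = b * x * b⁻¹ + b := by
        conv_lhs => rw [e1]
        rw [SkewBrace.mul_eq, hl]
      rw [SkewBrace.mul_eq b x, ← hc b] at e2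
      have e3 := add_right_cancel e2
      rw [SkewBrace.mul_eq b x, ← hc b]
      exact e3
    intro c
    rw [hxx, lam_mul, lam_mul, hx.1, lam_lam_inv]
  have e1 : b * x = (lam b x) * b := by
    rw [key.2.mul_eq, SkewBrace.mul_eq, key.2.2]
  rw [key.1, e1]; group

theorem InSoc.addConj {x : B} (hx : InSoc x) (b : B) : b + x + -b = x := by
  rw [← hx.2]; simp [add_assoc]

theorem InSoc.lam {x : B} (hx : InSoc x) (b : B) : InSoc (lam b x) := by
  have hc : ∀ c, SkewBrace.lam b x + c = c + SkewBrace.lam b x := by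
    intro c
    have := congrArg (SkewBrace.lam b) (hx.2 (SkewBrace.lam b⁻¹ c))
    rwa [lam_add, lam_add, lam_lam_inv] at this
  refine ⟨fun c => ?_, hc⟩
  have e : SkewBrace.lam b x = b * x * b⁻¹ := by
    rw [hx.mulConj b, ← hc]; simp [add_assoc]
  rw [e, lam_mul, lam_mul, hx.1, lam_lam_inv]

theorem InSoc.mulConj' {x : B} (hx : InSoc x) (b : B) : b * x * b⁻¹ = SkewBrace.lam b x := by
  rw [hx.mulConj, (hx.lam b).2 _ |>.symm]; simp [add_assoc]

theorem end_pow_zsmul (θ : AddMonoid.End B) {z : B} {e : ℤ} (h : θ z = e • z) (n : ℕ) :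
    (θ ^ n) z = e ^ n • z := by
  induction n with
  | zero => simp
  | succ n ih =>
    rw [pow_succ']
    show θ ((θ ^ n) z) = _
    rw [ih, map_zsmul, h, ← mul_zsmul, pow_succ]

theorem end_pow_add (θ : AddMonoid.End B) {b c : B} (h : θ b = b + c) (hc : θ c = c) (n : ℕ) :
    (θ ^ n) b = b + n • c := by
  induction n with
  | zero => simp
  | succ n ih =>
    rw [pow_succ']
    show θ ((θ ^ n) b) = _
    rw [ih, map_add, h, map_nsmul, hc, add_assoc, succ_nsmul']

/-- Ideals, as a predicate on additive subgroups. -/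
structure IsIdl (H : AddSubgroup B) : Prop where
  addConj : ∀ (b a : B), a ∈ H → b + a + -b ∈ H
  mulConj : ∀ (b a : B), a ∈ H → b * a * b⁻¹ ∈ H
  lam : ∀ (b a : B), a ∈ H → lam b a ∈ H

theorem isIdl_of_soc {H : AddSubgroup B} (h1 : ∀ x ∈ H, InSoc x)
    (h2 : ∀ (b a : B), a ∈ H → lam b a ∈ H) : IsIdl H where
  addConj b a ha := by rw [(h1 a ha).addConj]; exact ha
  mulConj b a ha := by rw [(h1 a ha).mulConj']; exact h2 b a ha
  lam := h2

/-- A `λ`-invariant additive subgroup is a multiplicative subgroup. -/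
def mulSub (H : AddSubgroup B) (hl : ∀ (b a : B), a ∈ H → lam b a ∈ H) : Subgroup B where
  carrier := H
  one_mem' := by rw [one_eq_zero]; exact H.zero_mem
  mul_mem' := fun {a b} ha hb => by
    rw [mul_eq]; exact H.add_mem ha (hl _ _ hb)
  inv_mem' := fun {a} ha => by
    rw [inv_eq]; exact H.neg_mem (hl _ _ ha)

theorem mem_mulSub {H : AddSubgroup B} {hl} {x : B} : x ∈ mulSub H hl ↔ x ∈ H := Iff.rfl

theorem card_mulSub (H : AddSubgroup B) (hl) : Nat.card (mulSub H hl) = Nat.card H := rfl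

theorem mem_iff_inv_mul {H : AddSubgroup B} (hl : ∀ (b a : B), a ∈ H → lam b a ∈ H) (a b : B) :
    -a + b ∈ H ↔ a⁻¹ * b ∈ mulSub H hl := by
  rw [mem_mulSub]
  constructor
  · intro h
    rw [← lam_inv_mul] at h
    have := hl a⁻¹ _ h
    rwa [lam_inv_lam] at this
  · intro h
    rw [← lam_inv_mul]
    exact hl _ _ h

end basics

/-- Surjective brace homomorphisms. -/
def IsEpi {B C : Type u} [SkewBrace B] [SkewBrace C] (f : B →+ C) : Prop :=
  (∀ a b, f (a * b) = f a * f b) ∧ Function.Surjective f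

section quot
variable {B : Type u} [SkewBrace B]

theorem exists_quot (H : AddSubgroup B) (hH : IsIdl H) :
    ∃ (E : Type u) (_ : SkewBrace E) (f : B →+ E), IsEpi f ∧ ∀ x, f x = 0 ↔ x ∈ H := by
  have : H.Normal := ⟨fun a ha b => hH.addConj b a ha⟩
  have hN : (mulSub H hH.lam).Normal := ⟨fun a ha b => hH.mulConj b a ha⟩
  have hrel : ∀ a b : B, QuotientAddGroup.leftRel H a b ↔
      QuotientGroup.leftRel (mulSub H hH.lam) a b := fun a b => by
    rw [QuotientAddGroup.leftRel_apply, QuotientGroup.leftRel_apply]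
    exact mem_iff_inv_mul hH.lam a b
  let φ : B ⧸ H ≃ B ⧸ (mulSub H hH.lam) := Quotient.congr (Equiv.refl B) hrel
  let gG : Group (B ⧸ H) := φ.group
  have hφ : ∀ b : B, φ (b : B ⧸ H) = (b : B ⧸ (mulSub H hH.lam)) := fun b => rfl
  have hmul : ∀ a b : B, ((a * b : B) : B ⧸ H) = (a : B ⧸ H) * (b : B ⧸ H) := by
    intro a b
    apply φ.injective
    have : φ ((a : B ⧸ H) * (b : B ⧸ H)) = φ (a : B ⧸ H) * φ (b : B ⧸ H) :=
      φ.apply_symm_apply (φ (a : B ⧸ H) * φ (b : B ⧸ H))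
    rw [this, hφ, hφ, hφ]; rfl
  have hone : (1 : B ⧸ H) = ((1 : B) : B ⧸ H) := by
    apply φ.injective
    have : φ (1 : B ⧸ H) = 1 := φ.apply_symm_apply 1
    rw [this, hφ]; rfl
  let S : SkewBrace (B ⧸ H) :=
    { (inferInstance : AddGroup (B ⧸ H)), gG with
      one_eq_zero := by
        rw [hone, one_eq_zero]; rfl
      skew_distrib := by
        intro a b c
        induction a using QuotientAddGroup.induction_on with | _ a
        induction b using QuotientAddGroup.induction_on with | _ b
        induction c using QuotientAddGroup.induction_on with | _ c
        rw [← QuotientAddGroup.mk_add, ← hmul, ← hmul, ← hmul, skew_distrib]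
        rfl }
  refine ⟨B ⧸ H, S, QuotientAddGroup.mk' H, ⟨hmul, QuotientAddGroup.mk'_surjective H⟩, ?_⟩
  intro x
  exact QuotientAddGroup.eq_zero_iff x

end quot
section epi
variable {B C D : Type u} [SkewBrace B] [SkewBrace C] [SkewBrace D]

theorem IsEpi.comp {g : C →+ D} {f : B →+ C} (hg : IsEpi g) (hf : IsEpi f) :
    IsEpi (g.comp f) :=
  ⟨fun a b => by simp [hf.1, hg.1], hg.2.comp hf.2⟩

theorem IsEpi.map_lam {f : B →+ C} (hf : IsEpi f) (a b : B) : f (lam a b) = lam (f a) (f b) := by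
  simp [lam, hf.1]

theorem IsEpi.map_one {f : B →+ C} : f 1 = 1 := by
  rw [one_eq_zero, map_zero, one_eq_zero]

theorem IsEpi.map_pow {f : B →+ C} (hf : IsEpi f) (a : B) (n : ℕ) : f (a ^ n) = f a ^ n := by
  induction n with
  | zero => simp [IsEpi.map_one]
  | succ n ih => rw [pow_succ, pow_succ, hf.1, ih]

theorem IsEpi.map_inv {f : B →+ C} (hf : IsEpi f) (a : B) : f (a⁻¹) = (f a)⁻¹ := by
  apply eq_inv_of_mul_eq_one_left
  rw [← hf.1, inv_mul_cancel, IsEpi.map_one]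

theorem IsEpi.map_soc {f : B →+ C} (hf : IsEpi f) {x : B} (hx : InSoc x) : InSoc (f x) := by
  refine ⟨fun c => ?_, fun c => ?_⟩
  · obtain ⟨b, rfl⟩ := hf.2 c
    rw [← hf.map_lam, hx.1]
  · obtain ⟨b, rfl⟩ := hf.2 c
    rw [← map_add, hx.2, map_add]

theorem IsEpi.ker_idl {f : B →+ C} (hf : IsEpi f) : IsIdl f.ker where
  addConj b a ha := by
    rw [AddMonoidHom.mem_ker] at *
    simp [ha]
  mulConj b a ha := by
    rw [AddMonoidHom.mem_ker] at *
    rw [hf.1, hf.1, ha, mul_zero', hf.map_inv, mul_inv_cancel, one_eq_zero]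
  lam b a ha := by
    rw [AddMonoidHom.mem_ker] at *
    rw [hf.map_lam, ha, lam_zero_right]

theorem exists_lift {f : B →+ C} {g : B →+ D} (hf : IsEpi f) (hg : IsEpi g)
    (h : ∀ x, f x = 0 → g x = 0) : ∃ k : C →+ D, IsEpi k ∧ ∀ x, k (f x) = g x := by
  have hk : ∀ x y, f x = f y → g x = g y := by
    intro x y hxy
    have : f (-x + y) = 0 := by simp [hxy]
    have := h _ this
    rw [map_add, map_neg] at this
    exact neg_add_eq_zero.mp this
  let s := Function.surjInv hf.2
  have hs : ∀ c, f (s c) = c := Function.surjInv_eq hf.2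
  refine ⟨AddMonoidHom.mk' (fun c => g (s c)) ?_, ⟨?_, ?_⟩, ?_⟩
  · intro a b
    rw [← map_add]; apply hk; simp [hs]
  · intro a b
    show g _ = g _ * g _
    rw [← hg.1]; apply hk; simp [hs, hf.1]
  · intro d
    obtain ⟨b, rfl⟩ := hg.2 d
    exact ⟨f b, hk _ _ (hs _)⟩
  · intro x
    exact hk _ _ (hs _)

theorem card_ker_comp (f : B →+ C) (g : C →+ D) (hf : Function.Surjective f) :
    Nat.card (g.comp f).ker = Nat.card f.ker * Nat.card g.ker := by
  have h1 := AddSubgroup.relIndex_mul_relIndex ⊥ f.ker (g.comp f).ker bot_le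
    (fun x hx => by
      rw [AddMonoidHom.mem_ker] at *
      simp [hx])
  rw [AddSubgroup.relIndex_bot_left, AddSubgroup.relIndex_bot_left,
    AddSubgroup.relIndex_ker] at h1
  have h2 : (g.comp f).ker.map f = g.ker := by
    ext c
    obtain ⟨b, rfl⟩ := hf c
    simp only [AddSubgroup.mem_map, AddMonoidHom.mem_ker, AddMonoidHom.comp_apply]
    constructor
    · rintro ⟨x, hx, h⟩
      rw [← h, hx]
    · intro h
      exact ⟨b, h, rfl⟩
  rw [h2] at h1
  exact h1.symm
end epi

end SkewBrace
namespace SkewBrace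
universe u
section steps

/-- The type of a kernel of a surjective homomorphism: `none` for infinite cyclic in the socle,
`some q` for prime order `q`. -/
def Step {B C : Type u} [SkewBrace B] [SkewBrace C] : Option ℕ → (B →+ C) → Prop
  | none, f => (∃ z, (∀ y, f y = 0 ↔ ∃ n : ℤ, y = n • z) ∧ (∀ n : ℤ, n • z = 0 → n = 0) ∧
      InSoc z)
  | some q, f => q.Prime ∧ Nat.card f.ker = q

/-- Chains of surjective homomorphisms with kernels of prescribed types. -/
def SS : List (Option ℕ) → (B : Type u) → [SkewBrace B] → Prop
  | [], B, _ => Subsingleton B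
  | t :: l, B, _ => ∃ (C : Type u) (_ : SkewBrace C) (f : B →+ C), IsEpi f ∧ Step t f ∧ SS l C

/-- A list of primes at most `p`. -/
def Prs (p : ℕ) (l : List (Option ℕ)) : Prop := ∀ t ∈ l, ∃ q, t = some q ∧ q ≤ p

theorem prs_nil (p : ℕ) : Prs p [] := by simp [Prs]

theorem prs_cons {p q : ℕ} (hq : q ≤ p) {l} (h : Prs p l) : Prs p (some q :: l) := by
  intro t ht
  rcases List.mem_cons.mp ht with rfl | ht
  · exact ⟨q, rfl, hq⟩
  · exact h t ht

theorem prs_append {p : ℕ} {l l'} (h : Prs p l) (h' : Prs p l') : Prs p (l ++ l') := by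
  intro t ht
  rcases List.mem_append.mp ht with ht | ht
  · exact h t ht
  · exact h' t ht

variable {B C D : Type u} [SkewBrace B] [SkewBrace C] [SkewBrace D]

theorem SS_of_inj {f : B →+ C} (hf : IsEpi f) (h0 : ∀ x, f x = 0 → x = 0) {l} (h : SS l C) :
    SS l B := by
  have hinj : Function.Injective f := (injective_iff_map_eq_zero f).mpr h0
  cases l with
  | nil =>
    have : Subsingleton C := h
    exact hinj.subsingleton
  | cons t l =>
    obtain ⟨D, _, g, hg, hs, hl⟩ := h
    refine ⟨D, _, g.comp f, hg.comp hf, ?_, hl⟩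
    cases t with
    | none =>
      obtain ⟨z, hz1, hz2, hz3⟩ := hs
      obtain ⟨z, rfl⟩ := hf.2 z
      refine ⟨z, fun y => ?_, fun n hn => ?_, fun b => ?_, fun b => ?_⟩
      · rw [AddMonoidHom.comp_apply, hz1]
        refine exists_congr fun n => ?_
        rw [← map_zsmul, hinj.eq_iff]
      · apply hz2; rw [← map_zsmul, hn, map_zero]
      · apply hinj; rw [hf.map_lam, hz3.1]
      · apply hinj; rw [map_add, map_add, hz3.2]
    | some q =>
      refine ⟨hs.1, ?_⟩
      rw [card_ker_comp f g hf.2, hs.2]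
      have : f.ker = ⊥ := (AddMonoidHom.ker_eq_bot_iff f).mpr hinj
      rw [this]; simp

theorem isIdl_zmul {z : B} (hz : InSoc z) (hl : ∀ b, ∃ n : ℤ, lam b z = n • z) (k : ℤ) :
    IsIdl (AddSubgroup.zmultiples (k • z)) := by
  apply isIdl_of_soc
  · intro x hx
    obtain ⟨n, rfl⟩ := AddSubgroup.mem_zmultiples_iff.mp hx
    exact (hz.zsmul k).zsmul n
  · intro b a ha
    obtain ⟨n, rfl⟩ := AddSubgroup.mem_zmultiples_iff.mp ha
    obtain ⟨m, hm⟩ := hl b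
    rw [lam_zsmul, lam_zsmul, hm]
    rw [AddSubgroup.mem_zmultiples_iff]
    refine ⟨n * m, ?_⟩
    rw [← mul_zsmul, ← mul_zsmul, ← mul_zsmul]
    congr 1; ring

theorem lam_gen {f : B →+ C} (hf : IsEpi f) {z : B}
    (hz1 : ∀ y, f y = 0 ↔ ∃ n : ℤ, y = n • z) (b : B) : ∃ n : ℤ, lam b z = n • z := by
  apply (hz1 _).mp
  apply hf.ker_idl.lam
  exact (hz1 z).mpr ⟨1, by simp⟩

theorem step_prime {f : B →+ C} {q : ℕ} (hq : q.Prime) {w : B}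
    (hk : ∀ x, f x = 0 ↔ x ∈ AddSubgroup.zmultiples w) (hw : q • w = 0) (hw0 : w ≠ 0) :
    Step (some q) f := by
  refine ⟨hq, ?_⟩
  have : f.ker = AddSubgroup.zmultiples w := by
    ext x; rw [AddMonoidHom.mem_ker, hk]
  rw [this, Nat.card_zmultiples]
  have := Fact.mk hq
  exact addOrderOf_eq_prime hw hw0

theorem refine_soc (p : ℕ) : ∀ (m : ℕ), 0 < m → (∀ q : ℕ, q.Prime → q ∣ m → q ≤ p) →
    ∀ (E D : Type u) [SkewBrace E] [SkewBrace D] (g : E →+ D) (l : List (Option ℕ)) (z : E),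
      IsEpi g → (∀ y, g y = 0 ↔ ∃ n : ℤ, y = n • z) → InSoc z → m • z = 0 → SS l D →
      ∃ l', Prs p l' ∧ SS (l' ++ l) E := by
  intro m
  induction m using Nat.strong_induction_on with
  | _ m ih =>
  intro hm hp E D _ _ g l z hg hz1 hz2 hz3 hl
  by_cases hm1 : m = 1
  · subst hm1
    refine ⟨[], prs_nil p, ?_⟩
    rw [one_nsmul] at hz3
    refine SS_of_inj hg (fun x hx => ?_) hl
    obtain ⟨n, rfl⟩ := (hz1 x).mp hx
    rw [hz3, smul_zero]
  · have hq : (m.minFac).Prime := Nat.minFac_prime hm1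
    obtain ⟨m', hm'⟩ := Nat.minFac_dvd m
    set q := m.minFac with hqdef
    have hm'0 : 0 < m' := by
      rcases Nat.eq_zero_or_pos m' with h | h
      · rw [h] at hm'; omega
      · exact h
    have hlt : m' < m := by
      rw [hm']; nlinarith [hq.two_le]
    have hp' : ∀ q : ℕ, q.Prime → q ∣ m' → q ≤ p := fun r hr hd =>
      hp r hr (hm' ▸ Dvd.dvd.mul_left hd _)
    by_cases hw : m' • z = 0
    · exact ih m' hlt hm'0 hp' E D g l z hg hz1 hz2 hw hl
    · have hI := isIdl_zmul hz2 (lam_gen hg hz1) (m' : ℤ)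
      rw [natCast_zsmul] at hI
      obtain ⟨E', _, f, hf, hfk⟩ := exists_quot _ hI
      obtain ⟨k, hk, hkf⟩ := exists_lift hf hg (fun x hx => by
        obtain ⟨n, rfl⟩ := AddSubgroup.mem_zmultiples_iff.mp ((hfk x).mp hx)
        rw [hz1]
        exact ⟨n * m', by rw [mul_zsmul, natCast_zsmul]⟩)
      obtain ⟨l', hl', hS⟩ := ih m' hlt hm'0 hp' E' D k l (f z) hk (fun y => by
        obtain ⟨x, rfl⟩ := hf.2 y
        rw [hkf, hz1]
        constructor
        · rintro ⟨n, rfl⟩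
          exact ⟨n, map_zsmul f n z⟩
        · rintro ⟨n, hn⟩
          rw [← hz1, ← hkf, hn, map_zsmul, hkf, (hz1 z).mpr ⟨1, by simp⟩, smul_zero])
        (hf.map_soc hz2) (by
          rw [← map_nsmul, hfk]; exact AddSubgroup.mem_zmultiples _) hl
      refine ⟨some q :: l', prs_cons (hp q hq (Nat.minFac_dvd m)) hl', E', _, f, hf, ?_, hS⟩
      refine step_prime hq hfk ?_ hw
      rw [← mul_nsmul', ← hm', hz3]

/-- Factoring an infinite cyclic socle kernel by a multiple. -/
theorem quot_mul (p : ℕ) {f : B →+ C} (hf : IsEpi f) {z : B}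
    (hz1 : ∀ y, f y = 0 ↔ ∃ n : ℤ, y = n • z) (hz3 : InSoc z) (m : ℕ) (hm : 0 < m)
    (hp : ∀ q : ℕ, q.Prime → q ∣ m → q ≤ p) {l} (hl : SS l C) :
    ∃ (E : Type u) (_ : SkewBrace E) (k : B →+ E), IsEpi k ∧
      (∀ x, k x = 0 ↔ ∃ n : ℤ, x = n • (m • z)) ∧
      ∃ l', Prs p l' ∧ SS (l' ++ l) E := by
  have hI := isIdl_zmul hz3 (lam_gen hf hz1) (m : ℤ)
  rw [natCast_zsmul] at hI
  obtain ⟨E, _, k, hk, hkk⟩ := exists_quot _ hI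
  refine ⟨E, _, k, hk, fun x => ?_, ?_⟩
  · rw [hkk, AddSubgroup.mem_zmultiples_iff]
    exact exists_congr fun n => eq_comm
  obtain ⟨g, hg, hgk⟩ := exists_lift hk hf (fun x hx => by
        obtain ⟨n, rfl⟩ := AddSubgroup.mem_zmultiples_iff.mp ((hkk x).mp hx)
        rw [hz1]
        exact ⟨n * m, by rw [mul_zsmul, natCast_zsmul]⟩)
  refine refine_soc p m hm hp E C g l (k z) hg (fun y => ?_) (hk.map_soc hz3) ?_ hl
  · obtain ⟨x, rfl⟩ := hk.2 y
    rw [hgk, hz1]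
    constructor
    · rintro ⟨n, rfl⟩
      exact ⟨n, map_zsmul k n z⟩
    · rintro ⟨n, hn⟩
      rw [← hz1, ← hgk, hn, map_zsmul, hgk, (hz1 z).mpr ⟨1, by simp⟩, smul_zero]
  · rw [← map_nsmul, hkk]; exact AddSubgroup.mem_zmultiples _

theorem prime_gen {H : AddSubgroup B} {r : ℕ} (hr : r.Prime) (hH : Nat.card H = r) {x y : B}
    (hx : x ∈ H) (hx0 : x ≠ 0) (hy : y ∈ H) : ∃ n : ℤ, y = n • x := by
  have := Fact.mk hr
  have h := mem_zmultiples_of_prime_card (G := H) hH (g := ⟨x, hx⟩) (g' := ⟨y, hy⟩)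
    (by simpa [Subtype.ext_iff] using hx0)
  obtain ⟨n, hn⟩ := AddSubgroup.mem_zmultiples_iff.mp h
  exact ⟨n, by simpa using (congrArg Subtype.val hn).symm⟩

theorem card_nsmul_mem {H : AddSubgroup B} {x : B} (hx : x ∈ H) : (Nat.card H) • x = 0 := by
  have h := card_nsmul_eq_zero' (G := H) (x := ⟨x, hx⟩)
  have h2 := congrArg (Subtype.val) h
  rwa [AddSubgroup.coe_nsmul] at h2

theorem zn_comm (n : ℤ) (m : ℕ) (x : B) : n • (m • x) = m • (n • x) := by
  rw [← natCast_zsmul, ← natCast_zsmul, ← mul_zsmul, ← mul_zsmul, mul_comm]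

theorem card_pow_mem {H : Subgroup B} {x : B} (hx : x ∈ H) : x ^ (Nat.card H) = 1 := by
  have h := pow_card_eq_one' (G := H) (x := ⟨x, hx⟩)
  have h2 := congrArg (Subtype.val) h
  rwa [Subgroup.coe_pow] at h2

theorem end_pow_id {f : B →+ C} {r : ℕ} (hr : r.Prime) (hc : Nat.card f.ker = r)
    (θ : AddMonoid.End B) (hinj : Function.Injective θ) (hθ : ∀ b, f (θ b) = f b) (b : B) :
    (θ ^ (r * (r - 1))) b = b := by
  have hfix : ∀ φ, f φ = 0 → (θ ^ (r - 1)) φ = φ := by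
    intro φ hφ
    by_cases h0 : φ = 0
    · rw [h0, map_zero]
    obtain ⟨e, he⟩ := prime_gen hr hc (x := φ) (y := θ φ) hφ h0 (by
      rw [AddMonoidHom.mem_ker, hθ, hφ])
    have hrφ : (r : ℤ) • φ = 0 := by
      have := card_nsmul_mem (H := f.ker) (x := φ) hφ
      rw [hc] at this
      rw [natCast_zsmul, this]
    have hre : ¬ (r : ℤ) ∣ e := by
      rintro ⟨k, rfl⟩
      rw [mul_comm, mul_zsmul, hrφ, smul_zero] at he
      exact h0 (hinj (he.trans (map_zero θ).symm))
    have hcop : IsCoprime e (r : ℤ) := by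
      rw [isCoprime_comm]
      exact (Prime.coprime_iff_not_dvd (Nat.prime_iff_prime_int.mp hr)).mpr hre
    have := Int.ModEq.pow_card_sub_one_eq_one hr hcop
    obtain ⟨k, hk⟩ := this.symm.dvd
    rw [end_pow_zsmul θ he]
    have : e ^ (r - 1) = 1 + k * r := by linarith
    rw [this, add_zsmul, mul_zsmul, hrφ, smul_zero, one_zsmul, add_zero]
  have hpow : ∀ n : ℕ, f ((θ ^ n) b) = f b := by
    intro n
    induction n with
    | zero => simp
    | succ n ih =>
      rw [pow_succ']
      exact (hθ _).trans ih
  have hcmem : f (-b + (θ ^ (r - 1)) b) = 0 := by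
    rw [map_add, map_neg, hpow]; simp
  rw [mul_comm, pow_mul]
  rw [end_pow_add (θ ^ (r - 1)) (b := b) (c := -b + (θ ^ (r - 1)) b) (by simp) (hfix _ hcmem)]
  have := card_nsmul_mem (H := f.ker) hcmem
  rw [hc] at this
  rw [this, add_zero]

theorem swap_fin_inf {p r : ℕ} (hrp : r ≤ p) {f : B →+ C} {g : C →+ D} (hf : IsEpi f)
    (hg : IsEpi g) (hsf : Step (some r) f) (hsg : Step none g) {l} (hl : SS l D) :
    ∃ l', Prs p l' ∧ SS (none :: (l' ++ l)) B := by
  obtain ⟨hr, hc⟩ := hsf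
  obtain ⟨ζ, hz1, hz2, hz3⟩ := hsg
  obtain ⟨u, rfl⟩ := hf.2 ζ
  set s := r * (r - 1) with hs
  have hr2 := hr.two_le
  have hspos : 0 < s := Nat.mul_pos (by omega) (by omega)
  have hv1 : ∀ b, lam (u ^ s) b = b := by
    intro b
    have := end_pow_id hr hc (lamEnd u) (lam_injective u)
      (fun b => by rw [lamEnd_apply, hf.map_lam, hz3.1]) b
    rwa [← lamEnd_pow] at this
  set v := u ^ s with hv
  have hfv : f v = s • f u := by
    rw [hv, hf.map_pow, pow_eq_nsmul hz3.1]
  have hw : InSoc (s • v) := by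
    constructor
    · intro b
      rw [← pow_eq_nsmul hv1, ← lamEnd_apply, lamEnd_pow]
      have : lamEnd v = 1 := by ext b; exact hv1 b
      rw [this, one_pow]; rfl
    · intro b
      have := end_pow_id hr hc (cnjEnd v) (fun x y h => by simpa [cnjEnd_apply] using h)
        (fun b => by
          rw [cnjEnd_apply, map_add, map_add, map_neg, hfv, (hz3.nsmul s).2]
          simp [add_assoc]) b
      rw [← hs, ← cnjEnd_nsmul, cnjEnd_apply] at this
      nth_rewrite 2 [← this]
      simp [add_assoc]
  set w := s • v with hwdef
  have hfw : f w = (s * s) • f u := by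
    rw [hwdef, map_nsmul, hfv, ← mul_nsmul]
  have hlam : ∀ b, ∃ n : ℤ, lam b (r • w) = n • (r • w) := by
    intro b
    obtain ⟨e, he⟩ := lam_gen hg hz1 (f b)
    have h1 : f (-(e • w) + lam b w) = 0 := by
      rw [map_add, map_neg, map_zsmul, hf.map_lam, hfw, lam_nsmul, he, zn_comm]
      simp
    have h2 := card_nsmul_mem (H := f.ker) h1
    rw [hc] at h2
    refine ⟨e, ?_⟩
    have hcomm : AddCommute (-(e • w)) (lam b w) := ((hw.zsmul e).neg).2 _
    rw [hcomm.add_nsmul] at h2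
    rw [lam_nsmul, zn_comm e r w]
    rw [neg_nsmul] at h2
    exact (neg_add_eq_zero.mp h2).symm
  -- the ideal generated by r • w
  have hI := isIdl_zmul (hw.nsmul r) hlam 1
  rw [one_zsmul] at hI
  obtain ⟨E, _, k, hk, hkk⟩ := exists_quot _ hI
  have hfrw : ∀ n : ℤ, f (n • r • w) = n • ((r * (s * s)) • f u) := by
    intro n
    rw [map_zsmul, map_nsmul, hfw, ← mul_nsmul']
  have hNpos : 0 < r * (s * s) := by positivity
  have hinf : ∀ n : ℤ, f (n • r • w) = 0 → n = 0 := by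
    intro n hn
    rw [hfrw, ← natCast_zsmul, ← mul_zsmul] at hn
    have := hz2 _ hn
    rcases mul_eq_zero.mp this with h | h
    · exact h
    · exact absurd (Nat.cast_eq_zero.mp h) hNpos.ne'
  obtain ⟨C', _, h, hh, hhk, l', hl', hS⟩ := quot_mul p hg hz1 hz3 (r * (s * s)) hNpos (by
    intro q hq hd
    have : q ∣ r ∨ q ∣ r - 1 := by
      rcases (Nat.Prime.dvd_mul hq).mp hd with h | h
      · exact Or.inl h
      · have : q ∣ s := by rcases (Nat.Prime.dvd_mul hq).mp h with h | h <;> exact h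
        exact (Nat.Prime.dvd_mul hq).mp this
    rcases this with h | h
    · exact (Nat.le_of_dvd (by omega) h).trans hrp
    · have := Nat.le_of_dvd (by omega) h
      omega) hl
  obtain ⟨t, ht, htk⟩ := exists_lift hk (hh.comp hf) (fun x hx => by
    obtain ⟨n, rfl⟩ := AddSubgroup.mem_zmultiples_iff.mp ((hkk x).mp hx)
    rw [AddMonoidHom.comp_apply, hhk]
    exact ⟨n, hfrw n⟩)
  refine ⟨some r :: l', prs_cons hrp hl', E, _, k, hk, ?_, C', _, t, ht, ?_, hS⟩
  · refine ⟨r • w, fun y => ?_, fun n hn => ?_, hw.nsmul r⟩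
    · rw [hkk, AddSubgroup.mem_zmultiples_iff]
      exact exists_congr fun n => eq_comm
    · apply hinf; rw [hn, map_zero]
  · refine ⟨hr, ?_⟩
    rw [← hc]
    symm
    apply Nat.card_congr
    refine Equiv.ofBijective (fun x : f.ker => (⟨k x.1, ?_⟩ : t.ker)) ⟨?_, ?_⟩
    · rw [AddMonoidHom.mem_ker, htk, AddMonoidHom.comp_apply, x.2, map_zero]
    · rintro ⟨x, hx⟩ ⟨y, hy⟩ hxy
      have hxy' : k x = k y := congrArg Subtype.val hxy
      have h1 : k (-x + y) = 0 := by rw [map_add, map_neg, hxy']; simp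
      have h2 : f (-x + y) = 0 := by
        rw [AddMonoidHom.mem_ker] at hx hy
        rw [map_add, map_neg, hx, hy]; simp
      obtain ⟨n, hn⟩ := AddSubgroup.mem_zmultiples_iff.mp ((hkk _).mp h1)
      rw [← hn] at h2
      rw [hinf n h2, zero_smul] at hn
      exact Subtype.ext (neg_add_eq_zero.mp hn.symm)
    · rintro ⟨y, hy⟩
      obtain ⟨x, rfl⟩ := hk.2 y
      rw [AddMonoidHom.mem_ker, htk, AddMonoidHom.comp_apply, hhk] at hy
      obtain ⟨n, hn⟩ := hy
      refine ⟨⟨x + -(n • r • w), ?_⟩, ?_⟩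
      · rw [AddMonoidHom.mem_ker, map_add, map_neg, hfrw, hn]; simp
      · apply Subtype.ext
        show k (x + -(n • r • w)) = k x
        rw [map_add, map_neg, (hkk (n • r • w)).mpr (AddSubgroup.mem_zmultiples_iff.mpr ⟨n, rfl⟩)]
        simp

end steps
end SkewBrace
@[to_additive]
theorem SkewBrace.sub_uniq_mul {G : Type*} [Group G] {H K L : Subgroup G} (hH : H ≤ L)
    (hK : K ≤ L) {q r : ℕ} (hq : q.Prime) (hr : 0 < r) (hrq : r < q) (cH : Nat.card H = q)
    (cL : Nat.card L = r * q) (cK : Nat.card K ∣ q) : K ≤ H := by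
  have h1 := Subgroup.relIndex_mul_relIndex ⊥ H L bot_le hH
  rw [Subgroup.relIndex_bot_left, Subgroup.relIndex_bot_left, cH, cL, mul_comm] at h1
  have h2 : H.relIndex L = r := Nat.eq_of_mul_eq_mul_right hq.pos h1
  have h3 := Subgroup.relIndex_le_of_le_right (H := H) hK (by omega)
  have h4 : H.relIndex K ∣ q := (Subgroup.relIndex_dvd_card H K).trans cK
  rcases (Nat.dvd_prime hq).mp h4 with h | h
  · exact Subgroup.relIndex_eq_one.mp h
  · omega

namespace SkewBrace
universe u
section swaps
variable {B C D : Type u} [SkewBrace B] [SkewBrace C] [SkewBrace D]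

theorem swap_fin_fin {r q : ℕ} (hrq : r < q) {f : B →+ C} {g : C →+ D} (hf : IsEpi f)
    (hg : IsEpi g) (hsf : Step (some r) f) (hsg : Step (some q) g) :
    ∃ (E : Type u) (_ : SkewBrace E) (f' : B →+ E) (g' : E →+ D), IsEpi f' ∧ IsEpi g' ∧
      Step (some q) f' ∧ Step (some r) g' := by
  obtain ⟨hr, hcf⟩ := hsf
  obtain ⟨hq, hcg⟩ := hsg
  have hgf := hg.comp hf
  have hcL : Nat.card (g.comp f).ker = r * q := by
    rw [card_ker_comp f g hf.2, hcf, hcg]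
  set L := (g.comp f).ker with hLdef
  have hLI : IsIdl L := hgf.ker_idl
  have hfin : Finite L := Nat.finite_of_card_ne_zero (by
    rw [hcL]; exact Nat.mul_ne_zero hr.ne_zero hq.ne_zero)
  have := Fact.mk hq
  obtain ⟨⟨t, htL⟩, ht⟩ := exists_prime_addOrderOf_dvd_card' (G := L) q (by
    rw [hcL]; exact Dvd.intro_left r rfl)
  rw [AddSubgroup.addOrderOf_mk] at ht
  have hTL : AddSubgroup.zmultiples t ≤ L := by
    rw [AddSubgroup.zmultiples_le]; exact htL
  have hcT : Nat.card (AddSubgroup.zmultiples t) = q := by rw [Nat.card_zmultiples, ht]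
  have huniq : ∀ y ∈ L, q • y = 0 → y ∈ AddSubgroup.zmultiples t := by
    intro y hy hqy
    have : AddSubgroup.zmultiples y ≤ AddSubgroup.zmultiples t :=
      sub_uniq_add hTL ((AddSubgroup.zmultiples_le).mpr hy) hq hr.pos hrq hcT hcL (by
        rw [Nat.card_zmultiples]; exact addOrderOf_dvd_of_nsmul_eq_zero hqy)
    exact this (AddSubgroup.mem_zmultiples y)
  have htor : ∀ s ∈ AddSubgroup.zmultiples t, q • s = 0 := fun s hs => by
    have := card_nsmul_mem hs
    rwa [hcT] at this
  have hTlam : ∀ (b a : B), a ∈ AddSubgroup.zmultiples t → lam b a ∈ AddSubgroup.zmultiples t := by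
    intro b a ha
    apply huniq _ (hLI.lam b a (hTL ha))
    rw [← lam_nsmul, htor a ha, lam_zero_right]
  have hI : IsIdl (AddSubgroup.zmultiples t) := by
    refine ⟨fun b a ha => ?_, fun b a ha => ?_, hTlam⟩
    · apply huniq _ (hLI.addConj b a (hTL ha))
      rw [← cnjEnd_apply, ← map_nsmul, htor a ha, map_zero]
    · have h1 : a ^ q = 1 := by
        have := card_pow_mem (H := mulSub _ hTlam) ha
        rwa [card_mulSub, hcT] at this
      have : Subgroup.zpowers (b * a * b⁻¹) ≤ mulSub _ hTlam :=
        sub_uniq_mul (L := mulSub L hLI.lam) (fun x hx => hTL hx)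
          ((Subgroup.zpowers_le).mpr (hLI.mulConj b a (hTL ha))) hq hr.pos hrq
          (by rw [card_mulSub, hcT]) (by rw [card_mulSub, hcL]) (by
            rw [Nat.card_zpowers]
            apply orderOf_dvd_of_pow_eq_one
            rw [conj_pow, h1]; simp)
      exact this (Subgroup.mem_zpowers _)
  obtain ⟨E, _, f', hf', hfk⟩ := exists_quot _ hI
  obtain ⟨g', hg', hgk⟩ := exists_lift hf' hgf (fun x hx => hTL ((hfk x).mp hx))
  have hkf' : f'.ker = AddSubgroup.zmultiples t := by
    ext x; rw [AddMonoidHom.mem_ker, hfk]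
  refine ⟨E, _, f', g', hf', hg', ⟨hq, by rw [hkf', hcT]⟩, hr, ?_⟩
  have h1 := card_ker_comp f' g' hf'.2
  have h2 : g'.comp f' = g.comp f := by ext x; exact hgk x
  rw [h2, ← hLdef, hcL, hkf', hcT, mul_comm] at h1
  exact (Nat.eq_of_mul_eq_mul_left hq.pos h1).symm

theorem odd_act {z y : B} {q : ℕ} (hodd : Odd q) (hz2 : ∀ n : ℤ, n • z = 0 → n = 0)
    (h1 : ∃ e : ℤ, lam y z = e • z) (h2 : lam (y ^ q) z = z) : lam y z = z := by
  obtain ⟨e, he⟩ := h1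
  have h3 := end_pow_zsmul (lamEnd y) he q
  rw [← lamEnd_pow, lamEnd_apply, h2] at h3
  have h4 : e ^ q - 1 = 0 := by
    apply hz2
    rw [sub_zsmul, ← h3, one_zsmul]; simp
  have h5 : e = 1 := by
    apply hodd.strictMono_pow.injective
    show e ^ q = 1 ^ q
    rw [one_pow]; linarith
  rw [he, h5, one_zsmul]

theorem swap_inf_fin {q : ℕ} (hq2 : q ≠ 2) {f : B →+ C} {g : C →+ D} (hf : IsEpi f)
    (hg : IsEpi g) (hsf : Step none f) (hsg : Step (some q) g) :
    Step none (g.comp f) ∨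
    ∃ (E : Type u) (_ : SkewBrace E) (f' : B →+ E) (g' : E →+ D), IsEpi f' ∧ IsEpi g' ∧
      Step (some q) f' ∧ Step none g' := by
  obtain ⟨z, hz1, hz2, hz3⟩ := hsf
  obtain ⟨hq, hcg⟩ := hsg
  have hodd : Odd q := hq.odd_of_ne_two hq2
  have hgf := hg.comp hf
  have hqz : (q : ℤ) ≠ 0 := by exact_mod_cast hq.ne_zero
  have hLI : IsIdl (g.comp f).ker := hgf.ker_idl
  have hfz : f z = 0 := (hz1 z).mpr ⟨1, by simp⟩
  have hcz : ∀ (x : B) (k : ℤ), AddCommute x (k • z) := fun x k => ((hz3.zsmul k).2 x).symm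
  have hL : ∀ u, f u ≠ 0 → g (f u) = 0 → ∀ y, g (f y) = 0 → ∃ n k : ℤ, y = n • u + k • z := by
    intro u hu0 hu y hy
    obtain ⟨n, hn⟩ := prime_gen hq hcg (x := f u) (y := f y) hu hu0 hy
    have : f (-(n • u) + y) = 0 := by rw [map_add, map_neg, map_zsmul, hn]; simp
    obtain ⟨k, hk⟩ := (hz1 _).mp this
    exact ⟨n, k, by rw [← hk]; simp⟩
  have hqL : ∀ y, g (f y) = 0 → f (q • y) = 0 := by
    intro y hy
    have := card_nsmul_mem (H := g.ker) (x := f y) hy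
    rw [hcg] at this
    rw [map_nsmul, this]
  obtain ⟨u, hu, hu0⟩ : ∃ u, g (f u) = 0 ∧ f u ≠ 0 := by
    have hne : g.ker ≠ ⊥ := by
      intro h
      rw [h] at hcg
      simp at hcg
      exact hq.ne_one hcg.symm
    obtain ⟨⟨c, hc⟩, hc0⟩ := AddSubgroup.ne_bot_iff_exists_ne_zero.mp hne
    obtain ⟨u, rfl⟩ := hf.2 c
    exact ⟨u, hc, fun h => hc0 (Subtype.ext h)⟩
  obtain ⟨a, ha⟩ := (hz1 _).mp (hqL u hu)
  have ha' : (q : ℤ) • u = a • z := by rw [natCast_zsmul, ha]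
  by_cases hqa : (q : ℤ) ∣ a
  · right
    obtain ⟨c, rfl⟩ := hqa
    obtain ⟨t, ht⟩ : ∃ t, t = u + -(c • z) := ⟨_, rfl⟩
    have hqt : q • t = 0 := by
      have h1 : AddCommute u (-(c • z)) := by
        rw [← neg_zsmul]; exact hcz u _
      rw [ht, h1.add_nsmul, ha, neg_nsmul, mul_zsmul, natCast_zsmul]
      simp
    have hft : f t = f u := by rw [ht, map_add, map_neg, map_zsmul, hfz]; simp
    have ht0 : t ≠ 0 := by
      rintro rfl
      rw [map_zero] at hft
      exact hu0 hft.symm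
    have hLt := hL t (by rwa [hft]) (by rwa [hft])
    have htL : t ∈ (g.comp f).ker := by
      rw [AddMonoidHom.mem_ker, AddMonoidHom.comp_apply, hft, hu]
    have hTL : AddSubgroup.zmultiples t ≤ (g.comp f).ker := by
      rw [AddSubgroup.zmultiples_le]; exact htL
    have hcT : Nat.card (AddSubgroup.zmultiples t) = q := by
      have := Fact.mk hq
      rw [Nat.card_zmultiples, addOrderOf_eq_prime hqt ht0]
    have htor : ∀ s ∈ AddSubgroup.zmultiples t, q • s = 0 := fun s hs => by
      have := card_nsmul_mem hs
      rwa [hcT] at this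
    have huniq : ∀ y ∈ (g.comp f).ker, q • y = 0 → y ∈ AddSubgroup.zmultiples t := by
      intro y hy hqy
      obtain ⟨n, k, rfl⟩ := hLt y hy
      rw [(hcz (n • t) k).add_nsmul, htor _ (AddSubgroup.mem_zmultiples_iff.mpr ⟨n, rfl⟩),
        zero_add, ← natCast_zsmul, ← mul_zsmul] at hqy
      have hk : k = 0 := (mul_eq_zero.mp (hz2 _ hqy)).resolve_left hqz
      rw [hk, zero_zsmul, add_zero]
      exact AddSubgroup.mem_zmultiples_iff.mpr ⟨n, rfl⟩
    have hTlam : ∀ (b a : B), a ∈ AddSubgroup.zmultiples t →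
        lam b a ∈ AddSubgroup.zmultiples t := by
      intro b a ha
      apply huniq _ (hLI.lam b a (hTL ha))
      rw [← lam_nsmul, htor a ha, lam_zero_right]
    have hpow : ∀ s ∈ AddSubgroup.zmultiples t, s ^ q = 1 := by
      intro s hs
      have := card_pow_mem (H := mulSub _ hTlam) hs
      rwa [card_mulSub, hcT] at this
    have hact : ∀ s ∈ AddSubgroup.zmultiples t, lam s z = z := by
      intro s hs
      apply odd_act hodd hz2 (lam_gen hf hz1 s)
      rw [hpow s hs, lam_one_left]
    have hI : IsIdl (AddSubgroup.zmultiples t) := by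
      refine ⟨fun b a ha => ?_, fun b a ha => ?_, hTlam⟩
      · apply huniq _ (hLI.addConj b a (hTL ha))
        rw [← cnjEnd_apply, ← map_nsmul, htor a ha, map_zero]
      · have hyq : (b * a * b⁻¹) ^ q = 1 := by rw [conj_pow, hpow a ha]; simp
        obtain ⟨n, k, hy⟩ := hLt _ (hLI.mulConj b a (hTL ha))
        have hs : n • t ∈ AddSubgroup.zmultiples t := AddSubgroup.mem_zmultiples_iff.mpr ⟨n, rfl⟩
        have e1 : (k • z) * (n • t) = n • t + k • z := by
          rw [(hz3.zsmul k).mul_eq, (hz3.zsmul k).2]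
        have e2 : (n • t) * (k • z) = n • t + k • z := by
          rw [mul_eq, lam_zsmul, hact _ hs]
        have hcomm : Commute (k • z) (n • t) := e1.trans e2.symm
        rw [hy, ← e1, hcomm.mul_pow, hpow _ hs, mul_one, pow_eq_nsmul (hz3.zsmul k).1,
          one_eq_zero, ← natCast_zsmul, ← mul_zsmul] at hyq
        have hk : k = 0 := (mul_eq_zero.mp (hz2 _ hyq)).resolve_left hqz
        rw [hy, hk, zero_zsmul, add_zero]
        exact hs
    obtain ⟨E, _, f', hf', hfk⟩ := exists_quot _ hI
    obtain ⟨g', hg', hgk⟩ := exists_lift hf' hgf (fun x hx => hTL ((hfk x).mp hx))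
    refine ⟨E, _, f', g', hf', hg', step_prime hq hfk hqt ht0, f' z, fun y => ?_, fun n hn => ?_,
      hf'.map_soc hz3⟩
    · obtain ⟨x, rfl⟩ := hf'.2 y
      rw [hgk]
      constructor
      · intro hx
        obtain ⟨n, k, rfl⟩ := hLt x hx
        refine ⟨k, ?_⟩
        rw [map_add, map_zsmul, map_zsmul, (hfk t).mpr (AddSubgroup.mem_zmultiples t)]
        simp
      · rintro ⟨n, hn⟩
        rw [← hgk, hn, map_zsmul, hgk, AddMonoidHom.comp_apply, hfz]
        simp
    · rw [← map_zsmul, hfk] at hn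
      have := htor _ hn
      rw [← natCast_zsmul, ← mul_zsmul] at this
      exact (mul_eq_zero.mp (hz2 _ this)).resolve_left hqz
  · left
    have hcop : IsCoprime (q : ℤ) a :=
      (Prime.coprime_iff_not_dvd (Nat.prime_iff_prime_int.mp hq)).mpr hqa
    obtain ⟨β, α, hαβ⟩ := hcop
    obtain ⟨w, hw⟩ : ∃ w, w = α • u + β • z := ⟨_, rfl⟩
    have hqw : (q : ℤ) • w = z := by
      rw [hw, (hcz (α • u) β).zsmul_add, ← mul_zsmul, ← mul_zsmul, mul_comm, mul_zsmul, ha',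
        ← mul_zsmul, ← add_zsmul]
      have : α * a + q * β = 1 := by linarith
      rw [this, one_zsmul]
    have haw : a • w = u := by
      rw [hw, (hcz (α • u) β).zsmul_add, ← mul_zsmul, ← mul_zsmul, mul_comm a β, mul_zsmul z β a,
        ← ha', ← mul_zsmul, ← add_zsmul]
      have : a * α + β * q = 1 := by linarith
      rw [this, one_zsmul]
    have hinf : ∀ n : ℤ, n • w = 0 → n = 0 := by
      intro n hn
      apply hz2
      rw [← hqw, ← mul_zsmul, mul_comm, mul_zsmul, hn, smul_zero]
    have hwL : g (f w) = 0 := by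
      rw [hw, map_add, map_zsmul, map_zsmul, hfz, map_add, map_zsmul, hu]; simp
    have hgen : ∀ y, (g.comp f) y = 0 ↔ ∃ n : ℤ, y = n • w := by
      intro y
      constructor
      · intro hy
        obtain ⟨n, k, rfl⟩ := hL u hu0 hu y hy
        refine ⟨n * a + k * q, ?_⟩
        rw [add_zsmul, mul_zsmul, mul_zsmul, haw, hqw]
      · rintro ⟨n, rfl⟩
        rw [map_zsmul, AddMonoidHom.comp_apply, hwL, smul_zero]
    have hwq : ∀ b, lam (w ^ q) b = b := by
      have h1 : f w ^ q = 1 := by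
        have := card_pow_mem (H := mulSub g.ker hg.ker_idl.lam) (x := f w) hwL
        rwa [card_mulSub, hcg] at this
      have h2 : f (w ^ q) = 0 := by rw [hf.map_pow, h1, one_eq_zero]
      obtain ⟨j, hj⟩ := (hz1 _).mp h2
      rw [hj]
      exact (hz3.zsmul j).1
    have hww : lam w w = w := odd_act hodd hinf (lam_gen hgf hgen w) (hwq w)
    have hzero : ∀ c, (∃ n : ℤ, c = n • w) → q • c = 0 → c = 0 := by
      rintro c ⟨n, rfl⟩ h
      rw [← natCast_zsmul, ← mul_zsmul] at h
      have := (mul_eq_zero.mp (hinf _ h)).resolve_left hqz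
      rw [this, zero_zsmul]
    refine ⟨w, hgen, hinf, fun b => ?_, fun b => ?_⟩
    · have hc : ∃ n : ℤ, -b + lam w b = n • w := by
        rw [← hgen, map_add, map_neg, hgf.map_lam, AddMonoidHom.comp_apply g f w, hwL,
          lam_zero_left]
        simp
      have h1 := end_pow_add (lamEnd w) (b := b) (c := -b + lam w b) (by simp [lamEnd_apply]) (by
        obtain ⟨n, hn⟩ := hc
        rw [hn, lamEnd_apply, lam_zsmul, hww]) q
      rw [← lamEnd_pow, lamEnd_apply, hwq] at h1
      have h2 := hzero _ hc (left_eq_add.mp h1)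
      exact (neg_add_eq_zero.mp h2).symm
    · have hc : ∃ n : ℤ, -b + cnjEnd w b = n • w := by
        rw [← hgen, cnjEnd_apply, map_add, map_neg, map_add, map_add, map_neg,
          AddMonoidHom.comp_apply g f w, hwL]
        simp
      have h1 := end_pow_add (cnjEnd w) (b := b) (c := -b + cnjEnd w b) (by simp) (by
        obtain ⟨n, hn⟩ := hc
        rw [hn, map_zsmul, cnjEnd_apply]
        simp) q
      rw [← cnjEnd_nsmul, ← natCast_zsmul w q, hqw, cnjEnd_apply, hz3.2] at h1
      have h2 := hzero _ hc (by simpa using h1)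
      have h3 := (neg_add_eq_zero.mp h2).symm
      rw [cnjEnd_apply] at h3
      nth_rewrite 2 [← h3]
      simp

end swaps

section assembly

theorem move_inf (p : ℕ) (l2 : List (Option ℕ)) : ∀ l1 : List (Option ℕ), Prs p l1 →
    ∀ (B : Type u) [SkewBrace B], SS (l1 ++ none :: l2) B →
      ∃ l3, Prs p l3 ∧ SS (none :: (l3 ++ l2)) B := by
  intro l1
  induction l1 with
  | nil => intro _ B _ h; exact ⟨[], prs_nil p, h⟩
  | cons t l1 ih =>
    intro hp B _ h
    obtain ⟨r, rfl, hr⟩ := hp t (by simp)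
    obtain ⟨C, _, f, hf, hs, hl⟩ := h
    obtain ⟨l3, hl3, D, _, g, hg, hsg, hS⟩ := ih (fun t ht => hp t (by simp [ht])) C hl
    obtain ⟨l', hl', h⟩ := swap_fin_inf hr hf hg hs hsg hS
    refine ⟨l' ++ l3, prs_append hl' hl3, ?_⟩
    rwa [List.append_assoc]

theorem card_epi {B C : Type u} [SkewBrace B] [SkewBrace C] {f : B →+ C} (hf : IsEpi f) :
    f.ker.index = Nat.card C := by
  rw [AddSubgroup.index_ker, AddMonoidHom.range_eq_top.mpr hf.2]
  exact AddSubgroup.card_top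

theorem prs_finite (p : ℕ) : ∀ l : List (Option ℕ), Prs p l →
    ∀ (B : Type u) [SkewBrace B], SS l B →
      Nat.card B ≠ 0 ∧ ∀ q : ℕ, q.Prime → q ∣ Nat.card B → q ≤ p := by
  intro l
  induction l with
  | nil =>
    intro _ B _ h
    have : Subsingleton B := h
    have : Nat.card B = 1 := Nat.card_eq_one_iff_unique.mpr ⟨this, ⟨0⟩⟩
    rw [this]
    refine ⟨one_ne_zero, fun q hq hd => ?_⟩
    exact absurd (Nat.dvd_one.mp hd) hq.ne_one
  | cons t l ih =>
    intro hp B _ h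
    obtain ⟨r, rfl, hr⟩ := hp t (by simp)
    obtain ⟨C, _, f, hf, hs, hl⟩ := h
    obtain ⟨h1, h2⟩ := ih (fun t ht => hp t (by simp [ht])) C hl
    have h3 := AddSubgroup.card_mul_index f.ker
    rw [card_epi hf, hs.2] at h3
    rw [← h3]
    refine ⟨Nat.mul_ne_zero hs.1.ne_zero h1, fun q hq hd => ?_⟩
    rcases (Nat.Prime.dvd_mul hq).mp hd with h | h
    · rw [(Nat.prime_dvd_prime_iff_eq hq hs.1).mp h]; exact hr
    · exact h2 q hq h

/-- All primes in the list are at most `p`. -/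
def Good (p : ℕ) (l : List (Option ℕ)) : Prop := ∀ q, some q ∈ l → q ≤ p

theorem prs_of_good {p : ℕ} {l} (h : Good p l) (hn : none ∉ l) : Prs p l := by
  intro t ht
  cases t with
  | none => exact absurd ht hn
  | some q => exact ⟨q, rfl, h q ht⟩

theorem good_of_prs {p : ℕ} {l} (h : Prs p l) : Good p l := by
  intro q hq
  obtain ⟨r, hr, hrp⟩ := h _ hq
  cases hr; exact hrp

theorem good_append {p : ℕ} {l l'} (h : Good p l) (h' : Good p l') : Good p (l ++ l') := by
  intro q hq
  rcases List.mem_append.mp hq with hq | hq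
  · exact h q hq
  · exact h' q hq

theorem tf_quot (p : ℕ) : ∀ (h : ℕ) (l : List (Option ℕ)), l.count none = h → Good p l →
    ∀ (B : Type u) [SkewBrace B], SS l B →
      ∃ (C : Type u) (_ : SkewBrace C) (g : B →+ C), IsEpi g ∧
        (Nat.card C ≠ 0 ∧ ∀ q : ℕ, q.Prime → q ∣ Nat.card C → q ≤ p) ∧
        ∀ x, g x = 0 → ∀ n : ℤ, n ≠ 0 → n • x = 0 → x = 0 := by
  intro h
  induction h with
  | zero =>
    intro l hc hg B _ hS
    refine ⟨B, _, AddMonoidHom.id B, ⟨fun _ _ => rfl, Function.surjective_id⟩,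
      prs_finite p l (prs_of_good hg (List.count_eq_zero.mp hc)) B hS, ?_⟩
    intro x hx n _ _
    exact hx
  | succ h ih =>
    intro l hc hg B _ hS
    have hmem : none ∈ l := List.count_pos_iff.mp (by omega)
    obtain ⟨l1, l2, rfl, hn⟩ := List.eq_append_cons_of_mem hmem
    have hg1 : Good p l1 := fun q hq => hg q (by simp [hq])
    have hg2 : Good p l2 := fun q hq => hg q (by simp [hq])
    obtain ⟨l3, hl3, C, _, f, hf, ⟨z, hz1, hz2, hz3⟩, hS'⟩ :=
      move_inf p l2 l1 (prs_of_good hg1 hn) B hS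
    have hn3 : none ∉ l3 := fun h => by
      obtain ⟨q, hq, _⟩ := hl3 _ h
      cases hq
    obtain ⟨D, _, g, hg', hD, ht⟩ := ih (l3 ++ l2) (by
      rw [List.count_append, List.count_cons, List.count_eq_zero.mpr hn] at hc
      rw [List.count_append, List.count_eq_zero.mpr hn3]
      simpa using hc) (good_append (good_of_prs hl3) hg2) C hS'
    refine ⟨D, _, g.comp f, hg'.comp hf, hD, fun x hx n hn0 hnx => ?_⟩
    have hfx : f x = 0 := ht (f x) hx n hn0 (by rw [← map_zsmul, hnx, map_zero])
    obtain ⟨k, rfl⟩ := (hz1 x).mp hfx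
    rw [← mul_zsmul] at hnx
    rw [(mul_eq_zero.mp (hz2 _ hnx)).resolve_left hn0, zero_zsmul]

theorem good_residual (p : ℕ) (hp : 2 ≤ p) : ∀ (l : List (Option ℕ)), Good p l →
    ∀ (B : Type u) [SkewBrace B], SS l B → ∀ x : B, x ≠ 0 →
      ∃ (C : Type u) (_ : SkewBrace C) (g : B →+ C), IsEpi g ∧
        (Nat.card C ≠ 0 ∧ ∀ q : ℕ, q.Prime → q ∣ Nat.card C → q ≤ p) ∧ g x ≠ 0 := by
  intro l
  induction l with
  | nil =>
    intro _ B _ h x hx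
    have : Subsingleton B := h
    exact absurd (Subsingleton.elim x 0) hx
  | cons t l ih =>
    intro hg B _ hS x hx
    have hg' : Good p l := fun q hq => hg q (by simp [hq])
    have hS0 := hS
    obtain ⟨C, _, f, hf, hs, hl⟩ := hS
    by_cases hfx : f x = 0
    · cases t with
      | some q =>
        obtain ⟨D, _, g, hgg, hD, ht⟩ := tf_quot p _ _ rfl hg B hS0
        refine ⟨D, _, g, hgg, hD, fun h => hx (ht x h q ?_ ?_)⟩
        · exact_mod_cast hs.1.ne_zero
        · have := card_nsmul_mem (H := f.ker) hfx
          rw [hs.2] at this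
          rw [natCast_zsmul, this]
      | none =>
        obtain ⟨z, hz1, hz2, hz3⟩ := hs
        obtain ⟨n, rfl⟩ := (hz1 x).mp hfx
        have hn0 : n ≠ 0 := by
          rintro rfl
          exact hx (zero_zsmul z)
        obtain ⟨E, _, k, hk, hkk, l', hl', hE⟩ := quot_mul p hf hz1 hz3 (2 ^ n.natAbs)
          (by positivity) (by
            intro q hq hd
            rw [(Nat.prime_dvd_prime_iff_eq hq Nat.prime_two).mp (hq.dvd_of_dvd_pow hd)]
            exact hp) hl
        obtain ⟨D, _, g, hgg, hD, ht⟩ :=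
          tf_quot p _ _ rfl (good_append (good_of_prs hl') hg') E hE
        refine ⟨D, _, g.comp k, hgg.comp hk, hD, fun h => ?_⟩
        have h1 : k (n • z) = 0 := by
          apply ht _ h ((2 ^ n.natAbs : ℕ) : ℤ) (by positivity)
          rw [← map_zsmul, hkk]
          exact ⟨n, by rw [natCast_zsmul, zn_comm]⟩
        obtain ⟨m, hm⟩ := (hkk _).mp h1
        rw [← natCast_zsmul, ← mul_zsmul] at hm
        have h2 : n - m * ((2 ^ n.natAbs : ℕ) : ℤ) = 0 := by
          apply hz2
          rw [sub_zsmul, hm]; simp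
        have h3 : ((2 ^ n.natAbs : ℕ) : ℤ) ∣ n := ⟨m, by linarith⟩
        have h4 : 2 ^ n.natAbs ∣ n.natAbs := Int.natCast_dvd.mp h3
        have h5 := Nat.le_of_dvd (Int.natAbs_pos.mpr hn0) h4
        exact absurd h5 (not_le.mpr Nat.lt_two_pow_self)
    · obtain ⟨D, _, g, hgg, hD, h⟩ := ih hg' C hl (f x) hfx
      exact ⟨D, _, g.comp f, hgg.comp hf, hD, h⟩

theorem good_or_bad (p : ℕ) (hp : 2 ≤ p) : ∀ (n : ℕ) (l : List (Option ℕ)), l.length ≤ n →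
    ∀ (B : Type u) [SkewBrace B], SS l B →
      (∃ l', l'.length ≤ n ∧ Good p l' ∧ SS l' B) ∨
      ∃ q l', l'.length + 1 ≤ n ∧ p < q ∧ SS (some q :: l') B := by
  intro n
  induction n with
  | zero =>
    intro l hl B _ h
    refine Or.inl ⟨l, hl, ?_, h⟩
    have : l = [] := List.length_eq_zero_iff.mp (by omega)
    subst this
    intro q hq
    simp at hq
  | succ n ih =>
    intro l hl B _ h
    cases l with
    | nil =>
      refine Or.inl ⟨[], by simp, ?_, h⟩
      intro q hq
      simp at hq
    | cons t l =>
      have h0 := h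
      obtain ⟨C, _, f, hf, hs, hS⟩ := h
      have hl' : l.length ≤ n := by simpa using hl
      have key : (∃ q, t = some q ∧ p < q) ∨ ∀ q, t = some q → q ≤ p := by
        by_contra hcon
        push Not at hcon
        obtain ⟨h1, q, rfl, h2⟩ := hcon
        exact absurd (h1 q rfl) (by omega)
      rcases key with ⟨q, rfl, hq⟩ | htg
      · exact Or.inr ⟨q, l, by omega, hq, h0⟩
      rcases ih l hl' C hS with ⟨l', hlen, hgood, hS'⟩ | ⟨q, l', hlen, hq, D, _, g, hg, hsg, hS'⟩
      · refine Or.inl ⟨t :: l', by simpa using hlen, ?_, C, _, f, hf, hs, hS'⟩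
        intro q hq
        rcases List.mem_cons.mp hq with h | h
        · exact htg q h.symm
        · exact hgood q h
      · cases t with
        | some r =>
          have hr := htg r rfl
          obtain ⟨E, _, f', g', hf', hg', h1, h2⟩ :=
            swap_fin_fin (lt_of_le_of_lt hr hq) hf hg hs hsg
          exact Or.inr ⟨q, some r :: l', by simpa using hlen, hq, E, _, f', hf', h1, D, _, g',
            hg', h2, hS'⟩
        | none =>
          rcases swap_inf_fin (by omega) hf hg hs hsg with h1 | ⟨E, _, f', g', hf', hg', h1, h2⟩
          · have h2 : SS (none :: l') B := ⟨D, _, g.comp f, hg.comp hf, h1, hS'⟩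
            rcases ih (none :: l') (by simpa using hlen) B h2 with ⟨m, h3, h4, h5⟩ |
              ⟨r, m, h3, h4, h5⟩
            · exact Or.inl ⟨m, by omega, h4, h5⟩
            · exact Or.inr ⟨r, m, by omega, h4, h5⟩
          · exact Or.inr ⟨q, none :: l', by simpa using hlen, hq, E, _, f', hf', h1, D, _, g',
              hg', h2, hS'⟩

theorem ideal_isIdl {B : Type u} [SkewBrace B] (I : BraceIdeal B) :
    IsIdl I.toSubbrace.addSubgroup where
  addConj b _ ha := I.addConj_mem b ha
  mulConj b _ ha := I.mulConj_mem b ha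
  lam b _ ha := I.lam_mem b ha

theorem exists_SS (B : Type u) [SkewBrace B] (hB : IsSupersoluble B) : ∃ l, SS l B := by
  obtain ⟨n, I, h0, hn, hsub, hstep⟩ := hB
  have key : ∀ j i : ℕ, i + j = n → ∀ (C : Type u) [SkewBrace C] (f : B →+ C), IsEpi f →
      (∀ x, f x = 0 ↔ x ∈ (I i).carrier) → ∃ l, SS l C := by
    intro j
    induction j with
    | zero =>
      intro i hi C _ f hf hk
      refine ⟨[], ?_⟩
      have hi' : i = n := by omega
      subst hi'
      refine ⟨fun a b => ?_⟩
      obtain ⟨x, rfl⟩ := hf.2 a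
      obtain ⟨y, rfl⟩ := hf.2 b
      rw [(hk x).mpr (by rw [hn]; trivial), (hk y).mpr (by rw [hn]; trivial)]
    | succ j ih =>
      intro i hi C _ f hf hk
      obtain ⟨D, _, g, hg, hgk⟩ := exists_quot _ (ideal_isIdl (I (i + 1)))
      have hgk' : ∀ x, g x = 0 ↔ x ∈ (I (i + 1)).carrier := hgk
      obtain ⟨l, hl⟩ := ih (i + 1) (by omega) D g hg hgk'
      obtain ⟨k, hkE, hkf⟩ := exists_lift hf hg (fun x hx =>
        (hgk' x).mpr (hsub i (by omega) ((hk x).mp hx)))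
      have hgen : ∀ x ∈ (I (i + 1)).carrier,
          (∀ y ∈ (I (i + 1)).carrier, ∃ n : ℤ, -(n • x) + y ∈ (I i).carrier) →
          ∀ y, k y = 0 ↔ ∃ n : ℤ, y = n • f x := by
        intro x hx hgen y
        obtain ⟨y, rfl⟩ := hf.2 y
        rw [hkf]
        constructor
        · intro hy
          obtain ⟨n, hn⟩ := hgen y ((hgk' y).mp hy)
          refine ⟨n, ?_⟩
          rw [← hk, map_add, map_neg, map_zsmul] at hn
          exact (neg_add_eq_zero.mp hn).symm
        · rintro ⟨n, hn⟩
          rw [← hkf, hn, map_zsmul, hkf, (hgk' x).mpr hx, smul_zero]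
      rcases hstep i (by omega) with ⟨⟨x, hx, h1, h2⟩, h3⟩ | ⟨q, hq, x, hx, h1, h2, h3⟩
      · refine ⟨none :: l, D, _, k, hkE, ⟨f x, hgen x hx h1, fun n hn => ?_, ?_, ?_⟩, hl⟩
        · apply h2; rwa [← hk, map_zsmul]
        · intro c
          obtain ⟨y, rfl⟩ := hf.2 c
          have := (h3 x hx).2.1 y (Set.mem_univ y)
          rw [← hk, map_add, map_neg, hf.map_lam] at this
          exact (neg_add_eq_zero.mp this).symm
        · intro c
          obtain ⟨y, rfl⟩ := hf.2 c
          have := (h3 x hx).2.2 y (Set.mem_univ y)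
          rw [← hk, map_add, map_neg, map_add, map_add] at this
          exact (neg_add_eq_zero.mp this).symm
      · refine ⟨some q :: l, D, _, k, hkE, ?_, hl⟩
        refine step_prime hq (w := f x) (fun y => ?_) ?_ ?_
        · rw [hgen x hx h3, AddSubgroup.mem_zmultiples_iff]
          exact exists_congr fun n => eq_comm
        · rw [← map_nsmul, hk]; exact h2
        · rwa [Ne, hk]
  exact key n 0 (by omega) B (AddMonoidHom.id B) ⟨fun _ _ => rfl, Function.surjective_id⟩
    (fun x => by rw [h0]; rfl)

/-- The kernel of a surjective homomorphism as a brace ideal. -/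
def kerIdeal {B C : Type u} [SkewBrace B] [SkewBrace C] (f : B →+ C) (hf : IsEpi f) :
    BraceIdeal B where
  carrier := f.ker
  zero_mem := f.ker.zero_mem
  add_mem := f.ker.add_mem
  neg_mem := f.ker.neg_mem
  mul_mem := (mulSub f.ker hf.ker_idl.lam).mul_mem
  inv_mem := (mulSub f.ker hf.ker_idl.lam).inv_mem
  addConj_mem b _ ha := hf.ker_idl.addConj b _ ha
  mulConj_mem b _ ha := hf.ker_idl.mulConj b _ ha
  lam_mem b _ ha := hf.ker_idl.lam b _ ha

end assembly

/-- Let `B` be a supersoluble brace and let `p` be the largest prime in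
`π(B,+) ∪ {2}`. Then `B` is residually `π`-finite, where `π` is the set of all
primes `q ≤ p`: the intersection of all ideals `I` of `B` such that `B/I` is finite
of `π`-number order is `{0}`. -/
theorem residually_pi_finite (B : Type*) [SkewBrace B] (hB : IsSupersoluble B)
    (p : ℕ) (hp : p.Prime) (hmem : p = 2 ∨ ∃ x : B, addOrderOf x = p)
    (hmax : ∀ q : ℕ, q.Prime → (∃ x : B, addOrderOf x = q) → q ≤ p) :
    ⋂ I ∈ {I : BraceIdeal B | I.toSubbrace.addSubgroup.index ≠ 0 ∧
        ∀ q : ℕ, q.Prime → q ∣ I.toSubbrace.addSubgroup.index → q ≤ p},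
      I.carrier = {0} := by
  obtain ⟨l, hl⟩ := exists_SS B hB
  have hgood : ∃ l, Good p l ∧ SS l B := by
    rcases good_or_bad p hp.two_le _ l le_rfl B hl with ⟨l', _, h1, h2⟩ | ⟨q, l', _, hq, h⟩
    · exact ⟨l', h1, h2⟩
    · exfalso
      obtain ⟨C, _, f, hf, hs, _⟩ := h
      have := Fact.mk hs.1
      have hfin : Finite f.ker := Nat.finite_of_card_ne_zero (by rw [hs.2]; exact hs.1.ne_zero)
      obtain ⟨⟨t, htL⟩, ht⟩ := exists_prime_addOrderOf_dvd_card' (G := f.ker) q (by rw [hs.2])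
      rw [AddSubgroup.addOrderOf_mk] at ht
      exact absurd (hmax q hs.1 ⟨t, ht⟩) (by omega)
  obtain ⟨l, hg, hS⟩ := hgood
  apply Set.eq_singleton_iff_unique_mem.mpr
  constructor
  · simp only [Set.mem_iInter]
    intro I _
    exact I.zero_mem
  · intro x hx
    by_contra hx0
    obtain ⟨C, _, g, hgE, hC, hgx⟩ := good_residual p hp.two_le l hg B hS x hx0
    simp only [Set.mem_iInter] at hx
    have hidx : (kerIdeal g hgE).toSubbrace.addSubgroup.index = Nat.card C := card_epi hgE
    have := hx (kerIdeal g hgE) (by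
      show _ ≠ 0 ∧ _
      rw [hidx]; exact hC)
    exact hgx this

end SkewBrace
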